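/- Let {G, (Γ0, Γ1), (Γ̃0, Γ̃1)} be a generalized boundary triple for the adjoint pair {S, S̃} with core {T, T̃} of {S*, S̃*}. Then dom S = ker Γ̃0 ∩ ker Γ̃1 and dom S̃ = ker Γ0 ∩ ker Γ1. -/

import Mathlib

/-!
Write `A0 = T↾ker Γ0` and `Ã0 = T̃↾ker Γ̃0`. Since `A0 ⊆ T`, every `f ∈ dom S = dom T*` lies in
`dom A0* = dom Ã0`, so `f ∈ dom T̃`, `Γ̃0 f = 0` and `T̃ f = A0* f = T* f`. The Green identity for `f`
then reduces to `(Γ0 h, Γ̃1 f) = 0` for all `h ∈ dom T`, and surjectivity of `Γ0` gives `Γ̃1 f = 0`.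
Conversely, if both boundary values of `f ∈ dom T̃` vanish, the Green identity says that
`(T h, f) = (h, T̃ f)` for all `h ∈ dom T`, so `f ∈ dom T* = dom S`. This is
`adjoint_domain_eq_of_green`; the second equality is the same lemma with the two operators
exchanged, the Green identity being conjugated.

Mathlib's adjoint of an operator that is not densely defined is the zero map on its domain, so the
density of `dom A0` and `dom Ã0` has to be established separately: `dense_domain_of_adjoint_eq`.
-/

open scoped ComplexInnerProductSpace

noncomputable section

/-- The inner product in the convention of the paper: linear in the *first* argument and
conjugate-linear in the second (the opposite of Mathlib's convention). -/
def pinner {E : Type*} [NormedAddCommGroup E] [InnerProductSpace ℂ E] (x y : E) : ℂ :=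
  ⟪y, x⟫

variable {H G : Type*}
  [NormedAddCommGroup H] [InnerProductSpace ℂ H] [CompleteSpace H]
  [NormedAddCommGroup G] [InnerProductSpace ℂ G] [CompleteSpace G]

/-- The restriction of a partially defined linear operator `T` in `H` to a submodule `p` of its
domain, viewed again as a partially defined linear operator in `H`. -/
def LinearPMap.restrictTo (T : H →ₗ.[ℂ] H) (p : Submodule ℂ T.domain) : H →ₗ.[ℂ] H where
  domain := p.map T.domain.subtype
  toFun := T.toFun ∘ₗ p.subtype ∘ₗ
    (Submodule.equivMapOfInjective T.domain.subtype (Submodule.injective_subtype _)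
      p).symm.toLinearMap

/-- `R` is the (everywhere defined, bounded) resolvent of the operator `A` at the point `lam`,
i.e. `R` is a two-sided inverse of `A - lam`. -/
def ResolventAt (A : H →ₗ.[ℂ] H) (lam : ℂ) (R : H →L[ℂ] H) : Prop :=
  (∀ x : A.domain, R (A x - lam • (x : H)) = (x : H)) ∧
  (∀ h : H, ∃ x : A.domain, (x : H) = R h ∧ A x - lam • (x : H) = h)

/-- `lam` belongs to the resolvent set of `A`: `A - lam` is a bijection of `dom A` onto `H`
with a bounded everywhere defined inverse. -/
def InResolventSet (A : H →ₗ.[ℂ] H) (lam : ℂ) : Prop :=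
  ∃ R : H →L[ℂ] H, ResolventAt A lam R

/-- `{G, (Γ0, Γ1), (Γt0, Γt1)}` is a generalized boundary triple for the adjoint pair `{S, St}`
with core `{T, Tt}` of `{S*, St*}`. -/
structure IsGeneralizedBoundaryTriple (S St T Tt : H →ₗ.[ℂ] H)
    (Γ0 Γ1 : T.domain →ₗ[ℂ] G) (Γt0 Γt1 : Tt.domain →ₗ[ℂ] G) : Prop where
  dense_S : Dense (S.domain : Set H)
  dense_St : Dense (St.domain : Set H)
  closed_S : S.IsClosed
  closed_St : St.IsClosed
  adjoint_pair : ∀ (f : S.domain) (g : St.domain),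
    pinner (S f) (g : H) = pinner (f : H) (St g)
  T_le : T ≤ S.adjoint
  Tt_le : Tt ≤ St.adjoint
  T_adjoint : T.adjoint = S
  Tt_adjoint : Tt.adjoint = St
  green : ∀ (f : T.domain) (g : Tt.domain),
    pinner (T f) (g : H) - pinner (f : H) (Tt g)
      = pinner (Γ1 f) (Γt0 g) - pinner (Γ0 f) (Γt1 g)
  surj_Γ0 : Function.Surjective Γ0
  surj_Γt0 : Function.Surjective Γt0
  A0_adjoint : (T.restrictTo (LinearMap.ker Γ0)).adjoint = Tt.restrictTo (LinearMap.ker Γt0)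
  At0_adjoint : (Tt.restrictTo (LinearMap.ker Γt0)).adjoint = T.restrictTo (LinearMap.ker Γ0)

theorem LinearPMap.restrictTo_apply_mk (T : H →ₗ.[ℂ] H) (p : Submodule ℂ T.domain)
    (x : T.domain) (hx : x ∈ p) (hx' : (x : H) ∈ (T.restrictTo p).domain) :
    T.restrictTo p ⟨x, hx'⟩ = T x := by
  have h : (Submodule.equivMapOfInjective T.domain.subtype (Submodule.injective_subtype _)
      p).symm ⟨x, hx'⟩ = ⟨x, hx⟩ := by
    rw [LinearEquiv.symm_apply_eq]
    rfl
  change T.toFun (p.subtype ((Submodule.equivMapOfInjective T.domain.subtype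
    (Submodule.injective_subtype _) p).symm ⟨x, hx'⟩)) = T x
  rw [h]
  rfl

/-- Two operators that are adjoint to each other are densely defined: if `dom A` were not dense,
`B = A*` would be the zero map by the junk-value convention, and `A = B*` would have full domain. -/
theorem dense_domain_of_adjoint_eq {A B : H →ₗ.[ℂ] H} (hA : A.adjoint = B)
    (hB : B.adjoint = A) : Dense (A.domain : Set H) := by
  by_contra h
  have hzero : ∀ y : B.domain, B y = 0 := by
    subst hA
    exact LinearPMap.adjoint_apply_of_not_dense h
  have htop : A.domain = ⊤ := by
    rw [Submodule.eq_top_iff']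
    intro x
    rw [← hB]
    exact LinearPMap.mem_adjoint_domain_of_exists x ⟨0, fun y => by simp [hzero y]⟩
  simp [htop] at h

/-- The domain of `T*` consists of the vectors on which both boundary maps of the other operator
`T̃` vanish. -/
theorem adjoint_domain_eq_of_green {T Tt : H →ₗ.[ℂ] H}
    {Γ0 Γ1 : T.domain →ₗ[ℂ] G} {Γt0 Γt1 : Tt.domain →ₗ[ℂ] G}
    (green : ∀ (f : T.domain) (g : Tt.domain),
      pinner (T f) (g : H) - pinner (f : H) (Tt g)
        = pinner (Γ1 f) (Γt0 g) - pinner (Γ0 f) (Γt1 g))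
    (surj : Function.Surjective Γ0)
    (hA : (T.restrictTo (LinearMap.ker Γ0)).adjoint = Tt.restrictTo (LinearMap.ker Γt0))
    (hdense : Dense ((T.restrictTo (LinearMap.ker Γ0)).domain : Set H)) :
    T.adjoint.domain = (LinearMap.ker Γt0 ⊓ LinearMap.ker Γt1).map Tt.domain.subtype := by
  have hdT : Dense (T.domain : Set H) :=
    hdense.mono (Submodule.map_subtype_le T.domain (LinearMap.ker Γ0))
  ext f
  constructor
  · intro hf
    have hw : ∀ x : T.domain, ⟪T.adjoint ⟨f, hf⟩, (x : H)⟫ = ⟪f, T x⟫ :=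
      LinearPMap.adjoint_isFormalAdjoint hdT ⟨f, hf⟩
    have hw' : ∀ x : (T.restrictTo (LinearMap.ker Γ0)).domain,
        ⟪T.adjoint ⟨f, hf⟩, (x : H)⟫ = ⟪f, T.restrictTo (LinearMap.ker Γ0) x⟫ := by
      rintro ⟨_, y, hy, rfl⟩
      exact (hw y).trans
        (congrArg (inner ℂ f) (T.restrictTo_apply_mk _ y hy ⟨y, hy, rfl⟩).symm)
    have hfA : f ∈ (T.restrictTo (LinearMap.ker Γ0)).adjoint.domain :=
      LinearPMap.mem_adjoint_domain_of_exists f ⟨_, hw'⟩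
    have hval := LinearPMap.adjoint_apply_eq hdense ⟨f, hfA⟩ hw'
    have hfB : f ∈ (Tt.restrictTo (LinearMap.ker Γt0)).domain := hA ▸ hfA
    have hval' : Tt.restrictTo (LinearMap.ker Γt0) ⟨f, hfB⟩ = T.adjoint ⟨f, hf⟩ := by
      rw [← hval]
      exact (@(LinearPMap.ext_iff.mp hA).2 f hfA hfB).symm
    obtain ⟨g, hg, rfl⟩ := id hfB
    have hTg : Tt g = T.adjoint ⟨g, hf⟩ :=
      (Tt.restrictTo_apply_mk _ g hg hfB).symm.trans hval'
    refine ⟨g, ⟨hg, ?_⟩, rfl⟩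
    obtain ⟨h, hh⟩ := surj (Γt1 g)
    have hgr := green h g
    have hwh : ⟪Tt g, (h : H)⟫ = ⟪(g : H), T h⟫ := by rw [hTg]; exact hw h
    have hg0 : Γt0 g = 0 := hg
    simp only [pinner, hwh, hg0, hh, sub_self, inner_zero_left, zero_sub] at hgr
    exact inner_self_eq_zero.mp (neg_eq_zero.mp hgr.symm)
  · rintro ⟨g, ⟨hg0, hg1⟩, rfl⟩
    refine LinearPMap.mem_adjoint_domain_of_exists _ ⟨Tt g, fun x => ?_⟩
    have hgr := green x g
    rw [show Γt0 g = 0 from hg0, show Γt1 g = 0 from hg1] at hgr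
    simp only [pinner, inner_zero_left, sub_self] at hgr
    exact (sub_eq_zero.mp hgr).symm

theorem stmt1
    (S St T Tt : H →ₗ.[ℂ] H)
    (Γ0 Γ1 : T.domain →ₗ[ℂ] G) (Γt0 Γt1 : Tt.domain →ₗ[ℂ] G)
    (hgbt : IsGeneralizedBoundaryTriple S St T Tt Γ0 Γ1 Γt0 Γt1)
    :
    S.domain = (LinearMap.ker Γt0 ⊓ LinearMap.ker Γt1).map Tt.domain.subtype ∧
    St.domain = (LinearMap.ker Γ0 ⊓ LinearMap.ker Γ1).map T.domain.subtype := by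
  refine ⟨?_, ?_⟩
  · rw [← hgbt.T_adjoint]
    exact adjoint_domain_eq_of_green hgbt.green hgbt.surj_Γ0 hgbt.A0_adjoint
      (dense_domain_of_adjoint_eq hgbt.A0_adjoint hgbt.At0_adjoint)
  · rw [← hgbt.Tt_adjoint]
    refine adjoint_domain_eq_of_green (Γ1 := Γt1) (fun g f => ?_) hgbt.surj_Γt0 hgbt.At0_adjoint
      (dense_domain_of_adjoint_eq hgbt.At0_adjoint hgbt.A0_adjoint)
    have h := congrArg (starRingEnd ℂ) (hgbt.green f g)
    simp only [pinner, map_sub, inner_conj_symm] at h ⊢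
    linear_combination -h

end
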